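/- Torus diffeomorphism lemma: let α ∈ H(T^∞_{σ+ρ}, ℓ^∞) be real on real. There exists δ ∈ (0,1) such that if ρ^{-1}|α|_{σ+ρ} ≤ δ, then the map φ ↦ φ + α(φ) is an invertible diffeomorphism of T^∞_σ (with respect to the ℓ^∞ topology) and its inverse has the form θ ↦ θ + α̃(θ) with α̃ ∈ H(T^∞_{σ+ρ/2}, ℓ^∞) real on real and |α̃|_{σ+ρ/2} ≤ C |α|_{σ+ρ}. -/

import Mathlib

open scoped BigOperators ENNReal

noncomputable def wnorm (η : ℝ) (ℓ : ℕ →₀ ℤ) : ℝ :=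
  ∑ i ∈ ℓ.support, ((i : ℝ) + 1) ^ η * |(ℓ i : ℝ)|

/-- `ℓ·φ` for φ ∈ ℂ^ℕ (finite sum). -/
noncomputable def edot (ℓ : ℕ →₀ ℤ) (φ : ℕ → ℂ) : ℂ :=
  ∑ i ∈ ℓ.support, (ℓ i : ℂ) * φ i

/-- the thickened infinite-dimensional torus `T^∞_s` : |Im φ_i| ≤ s⟨i⟩^η. -/
def Tinf (η s : ℝ) : Set (ℕ → ℂ) :=
  {φ | ∀ i, |(φ i).im| ≤ s * ((i : ℝ) + 1) ^ η}

/-- realization of an ℓ^∞-valued Fourier series `α(φ) = Σ_ℓ a(ℓ) e^{iℓ·φ}`. -/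
noncomputable def realize (a : (ℕ →₀ ℤ) → ℕ → ℂ) (φ : ℕ → ℂ) : ℕ → ℂ :=
  fun i => ∑' ℓ : ℕ →₀ ℤ, a ℓ i * Complex.exp (Complex.I * edot ℓ φ)

/-- the norm `|α|_σ = Σ_ℓ e^{σ|ℓ|_η} ‖a(ℓ)‖_{ℓ^∞}` (valued in ℝ≥0∞). -/
noncomputable def supNormCoef (η σ : ℝ) (a : (ℕ →₀ ℤ) → ℕ → ℂ) : ℝ≥0∞ :=
  ∑' ℓ : ℕ →₀ ℤ,
    ENNReal.ofReal (Real.exp (σ * wnorm η ℓ)) * ⨆ i, (‖a ℓ i‖₊ : ℝ≥0∞)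

/-- "real on real" at the level of Fourier coefficients. -/
def RealOnReal (a : (ℕ →₀ ℤ) → ℕ → ℂ) : Prop :=
  ∀ ℓ i, (starRingEnd ℂ) (a ℓ i) = a (-ℓ) i

/-!
Fourier series with coefficients in `ℓ^∞` and finite weighted `ℓ¹` norm form a commutative Banach
algebra, so that `e^{iℓ·β}` makes sense as an exponential in it and `α(φ + β(φ))` is the
convergent series `∑ a(ℓ) e^{iℓ·φ} e^{iℓ·β(φ)}`. By the Cauchy estimate `β ↦ -α ∘ (id + β)` is a
contraction on a ball as soon as `α` is small compared with the loss of width `ρ`. Its fixed point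
`α̃` satisfies `α̃ + α ∘ (id + α̃) = 0`, which says that `id + α̃` is a right inverse of `id + α`.
The same estimate for constant `β` is a pointwise Lipschitz bound on `α`, which makes `id + α`
injective at small distances and the right inverse a left inverse. Since `α` is real on real,
`β ↦ -α ∘ (id + β)` commutes with complex conjugation, hence `α̃` is real on real.
-/

section Exponential

variable {𝔸 : Type*}

theorem norm_exp_le_exp_norm [NormedRing 𝔸] [NormOneClass 𝔸] [NormedAlgebra ℝ 𝔸] [CompleteSpace 𝔸]
    (x : 𝔸) : ‖NormedSpace.exp x‖ ≤ Real.exp ‖x‖ := by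
  rw [← (NormedSpace.exp_series_hasSum_exp' (𝕂 := ℝ) x).tsum_eq, Real.exp_eq_exp_ℝ]
  refine tsum_of_norm_bounded (NormedSpace.exp_series_hasSum_exp' (𝕂 := ℝ) ‖x‖) fun n => ?_
  rw [norm_smul, norm_inv, Real.norm_natCast, smul_eq_mul]
  gcongr
  exact norm_pow_le x n

theorem norm_exp_sub_exp_le [NormedCommRing 𝔸] [NormOneClass 𝔸] [NormedAlgebra ℝ 𝔸]
    [CompleteSpace 𝔸] {x y : 𝔸} {r : ℝ} (hx : ‖x‖ ≤ r) (hy : ‖y‖ ≤ r) :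
    ‖NormedSpace.exp x - NormedSpace.exp y‖ ≤ Real.exp r * ‖x - y‖ := by
  refine (convex_closedBall (0 : 𝔸) r).norm_image_sub_le_of_norm_hasFDerivWithin_le (𝕜 := ℝ)
    (fun z _ => hasFDerivAt_exp.hasFDerivWithinAt) (fun z hz => ?_)
    (mem_closedBall_zero_iff.2 hy) (mem_closedBall_zero_iff.2 hx)
  refine ContinuousLinearMap.opNorm_le_bound _ (Real.exp_nonneg r) fun v => ?_
  calc ‖NormedSpace.exp z * v‖ ≤ ‖NormedSpace.exp z‖ * ‖v‖ := norm_mul_le _ _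
    _ ≤ Real.exp r * ‖v‖ := by
      gcongr
      exact (norm_exp_le_exp_norm z).trans (Real.exp_le_exp.2 (mem_closedBall_zero_iff.1 hz))

theorem map_exp_of_continuousAlgHom {𝔹 : Type*} [NormedRing 𝔸] [NormedAlgebra ℝ 𝔸]
    [CompleteSpace 𝔸] [NormedRing 𝔹] [NormedAlgebra ℝ 𝔹] (f : 𝔸 →A[ℝ] 𝔹) (x : 𝔸) :
    f (NormedSpace.exp x) = NormedSpace.exp (f x) :=
  NormedSpace.map_exp_of_mem_ball f f.continuous x <|
    (NormedSpace.expSeries_radius_eq_top ℝ 𝔸).symm ▸ edist_lt_top x 0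

end Exponential

section Weighted

open ContinuousLinearMap (compL lsmul opNorm_le_bound opNorm_le_bound₂)

/-- A positive submultiplicative weight on an additive monoid, normalised at `0`. -/
structure SubmultiplicativeWeight (G : Type*) [AddMonoid G] where
  toFun : G → ℝ
  pos (k : G) : 0 < toFun k
  map_zero : toFun 0 = 1
  map_add_le (k m : G) : toFun (k + m) ≤ toFun k * toFun m

instance (G : Type*) [AddMonoid G] : CoeFun (SubmultiplicativeWeight G) fun _ => G → ℝ :=
  ⟨SubmultiplicativeWeight.toFun⟩

/-- The space of `E`-valued families `x` on `G` with `∑ w k * ‖x k‖ < ∞`. An element is stored as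
the unweighted `ℓ¹` family `w k • x k`; see `WeightedL1.coeff` for `x k` itself. -/
def WeightedL1 {G : Type*} [AddMonoid G] (_w : SubmultiplicativeWeight G) (E : Type*)
    [NormedAddCommGroup E] : Type _ :=
  lp (fun _ : G => E) 1

namespace WeightedL1

section Module

variable {G : Type*} [AddMonoid G] {w : SubmultiplicativeWeight G}
variable {E F : Type*} [NormedAddCommGroup E] [NormedAddCommGroup F]

noncomputable instance : NormedAddCommGroup (WeightedL1 w E) :=
  inferInstanceAs (NormedAddCommGroup (lp (fun _ : G => E) 1))

variable [NormedSpace ℝ E] [NormedSpace ℝ F]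

noncomputable instance : NormedSpace ℝ (WeightedL1 w E) :=
  inferInstanceAs (NormedSpace ℝ (lp (fun _ : G => E) 1))

instance [CompleteSpace E] : CompleteSpace (WeightedL1 w E) :=
  inferInstanceAs (CompleteSpace (lp (fun _ : G => E) 1))

open Classical in
variable (w) in
/-- The family equal to `e` at `k` and to `0` elsewhere. -/
noncomputable def single (k : G) : E →L[ℝ] WeightedL1 w E :=
  w k • lp.singleContinuousLinearMap ℝ (fun _ => E) 1 k

/-- The value at `k` of a family. -/
noncomputable def coeff (k : G) : WeightedL1 w E →L[ℝ] E :=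
  (w k)⁻¹ • lp.evalCLM ℝ (fun _ => E) 1 k

theorem norm_single (k : G) (e : E) : ‖single w k e‖ = w k * ‖e‖ := by
  classical
  refine (norm_smul (w k) (lp.single (E := fun _ : G => E) 1 k e)).trans ?_
  rw [lp.norm_single one_pos, Real.norm_of_nonneg (w.pos k).le]

theorem coeff_single_same (k : G) (e : E) : coeff k (single w k e) = e := by
  classical
  change (w k)⁻¹ • w k • lp.single (E := fun _ : G => E) 1 k e k = e
  rw [lp.single_apply_self, inv_smul_smul₀ (w.pos k).ne']

theorem coeff_single_of_ne {k m : G} (h : m ≠ k) (e : E) : coeff m (single w k e) = 0 := by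
  classical
  change (w m)⁻¹ • w k • lp.single (E := fun _ : G => E) 1 k e m = 0
  rw [lp.single_apply_ne _ _ _ h, smul_zero, smul_zero]

theorem hasSum_single (x : WeightedL1 w E) : HasSum (fun k => single w k (coeff k x)) x := by
  classical
  have h (k : G) : single w k (coeff k x) = lp.single (E := fun _ : G => E) 1 k (x.1 k) := by
    change w k • lp.single (E := fun _ : G => E) 1 k ((w k)⁻¹ • x.1 k) = _
    rw [← lp.single_smul, smul_inv_smul₀ (w.pos k).ne']
  simp only [h]
  exact lp.hasSum_single ENNReal.one_ne_top x

theorem hasSum_norm (x : WeightedL1 w E) : HasSum (fun k => w k * ‖coeff k x‖) ‖x‖ := by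
  convert lp.hasSum_norm (by simp : 0 < (1 : ENNReal).toReal) x using 2 with k
  · change w k * ‖(w k)⁻¹ • (x.1 k : E)‖ = ‖(x.1 k : E)‖ ^ ENNReal.toReal 1
    rw [norm_smul, norm_inv, Real.norm_of_nonneg (w.pos k).le,
      mul_inv_cancel_left₀ (w.pos k).ne', ENNReal.toReal_one, Real.rpow_one]
  · rw [ENNReal.toReal_one, Real.rpow_one]
    rfl

theorem exists_coeff_eq {a : G → E} (ha : Summable fun k => w k * ‖a k‖) :
    ∃ x : WeightedL1 w E, ∀ k, coeff k x = a k := by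
  have hmem : Memℓp (fun k => w k • a k) 1 := by
    refine memℓp_gen (ha.congr fun k => ?_)
    rw [ENNReal.toReal_one, Real.rpow_one, norm_smul, Real.norm_of_nonneg (w.pos k).le]
  exact ⟨⟨_, hmem⟩, fun k => inv_smul_smul₀ (w.pos k).ne' (a k)⟩

theorem ext_coeff {x y : WeightedL1 w E} (h : ∀ k, coeff k x = coeff k y) : x = y := by
  refine (hasSum_single x).unique ?_
  simpa only [h] using hasSum_single y

theorem continuousLinearMap_ext {f g : WeightedL1 w E →L[ℝ] F}
    (h : ∀ k e, f (single w k e) = g (single w k e)) : f = g := by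
  ext x
  refine ((hasSum_single x).mapL f).unique ?_
  simpa only [h] using (hasSum_single x).mapL g

theorem norm_apply_coeff_le {f : G → E →L[ℝ] F} {C : ℝ} (hf : ∀ k, ‖f k‖ ≤ C * w k) (k : G)
    (x : WeightedL1 w E) : ‖f k (coeff k x)‖ ≤ C * (w k * ‖coeff k x‖) :=
  ((f k).le_of_opNorm_le (hf k) _).trans_eq (mul_assoc _ _ _)

variable [CompleteSpace F]

/-- The continuous linear map sending `single w k e` to `f k e`. -/
noncomputable def lift (f : G → E →L[ℝ] F) {C : ℝ} (hf : ∀ k, ‖f k‖ ≤ C * w k) :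
    WeightedL1 w E →L[ℝ] F :=
  have hsum (x : WeightedL1 w E) : Summable fun k => f k (coeff k x) :=
    .of_norm_bounded ((hasSum_norm x).summable.mul_left C) fun k => norm_apply_coeff_le hf k x
  LinearMap.mkContinuous
    { toFun x := ∑' k, f k (coeff k x)
      map_add' x y := by simp only [map_add, (hsum x).tsum_add (hsum y)]
      map_smul' c x := by simp only [map_smul, RingHom.id_apply, (hsum x).tsum_const_smul c] }
    C fun x => tsum_of_norm_bounded ((hasSum_norm x).mul_left C) fun k => norm_apply_coeff_le hf k x

variable {f : G → E →L[ℝ] F} {C : ℝ} (hf : ∀ k, ‖f k‖ ≤ C * w k)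

theorem lift_single (k : G) (e : E) : lift f hf (single w k e) = f k e := by
  refine (tsum_eq_single k fun m hm => ?_).trans ?_
  · rw [coeff_single_of_ne hm, map_zero]
  · rw [coeff_single_same]

theorem norm_lift_le (x : WeightedL1 w E) : ‖lift f hf x‖ ≤ C * ‖x‖ :=
  tsum_of_norm_bounded ((hasSum_norm x).mul_left C) fun k => norm_apply_coeff_le hf k x

theorem hasSum_lift (x : WeightedL1 w E) : HasSum (fun k => f k (coeff k x)) (lift f hf x) :=
  (Summable.of_norm_bounded ((hasSum_norm x).summable.mul_left C) fun k =>
    norm_apply_coeff_le hf k x).hasSum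

/-- The map applying a continuous linear map to every value of a family. -/
noncomputable def mapCoeff (f : E →L[ℝ] F) : WeightedL1 w E →L[ℝ] WeightedL1 w F :=
  lift (fun k => (single w k).comp f) (C := ‖f‖) fun k =>
    ContinuousLinearMap.opNorm_le_bound _ (by have := w.pos k; positivity) fun e => by
      rw [ContinuousLinearMap.comp_apply, norm_single, mul_comm ‖f‖, mul_assoc]
      exact mul_le_mul_of_nonneg_left (f.le_opNorm e) (w.pos k).le

theorem mapCoeff_single (f : E →L[ℝ] F) (k : G) (e : E) :
    mapCoeff f (single w k e) = single w k (f e) :=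
  lift_single _ k e

theorem norm_mapCoeff_le (f : E →L[ℝ] F) (x : WeightedL1 w E) : ‖mapCoeff f x‖ ≤ ‖f‖ * ‖x‖ :=
  norm_lift_le _ x

end Module

section Algebra

variable {G : Type*} [AddCommMonoid G] {w : SubmultiplicativeWeight G}
variable {R A : Type*} [NormedCommRing R] [NormedAlgebra ℝ R] [CompleteSpace R]

noncomputable instance : Module R (WeightedL1 w R) :=
  inferInstanceAs (Module R (lp (fun _ : G => R) 1))

instance : IsBoundedSMul R (WeightedL1 w R) :=
  inferInstanceAs (IsBoundedSMul R (lp (fun _ : G => R) 1))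

instance : IsScalarTower ℝ R (WeightedL1 w R) :=
  inferInstanceAs (IsScalarTower ℝ R (lp (fun _ : G => R) 1))

omit [CompleteSpace R] in
theorem smul_single (r s : R) (k : G) : r • single w k s = single w k (r * s) := by
  classical
  change r • w k • lp.single (E := fun _ : G => R) 1 k s = w k • lp.single 1 k (r • s)
  rw [lp.single_smul, smul_comm]

variable (w R) in
/-- Translation of families by `k`. -/
noncomputable def shift (k : G) : WeightedL1 w R →L[ℝ] WeightedL1 w R :=
  lift (fun m => single w (k + m)) (C := w k) fun m =>
    opNorm_le_bound _ (mul_pos (w.pos k) (w.pos m)).le fun r => by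
      rw [norm_single]
      gcongr
      exact w.map_add_le k m

variable (w R) in
/-- Convolution of families, as a bilinear map. -/
noncomputable def convolution : WeightedL1 w R →L[ℝ] WeightedL1 w R →L[ℝ] WeightedL1 w R :=
  lift (fun k => (((compL ℝ _ _ _).flip (shift w R k)).comp
    (lsmul ℝ R))) (C := 1) fun k =>
    opNorm_le_bound₂ _ (by simpa using (w.pos k).le) fun r x => by
      change ‖r • shift w R k x‖ ≤ _
      calc ‖r • shift w R k x‖ ≤ ‖r‖ * (w k * ‖x‖) :=
            (norm_smul_le _ _).trans (by gcongr; exact norm_lift_le _ x)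
        _ = 1 * w k * ‖r‖ * ‖x‖ := by ring

theorem convolution_single (k m : G) (r s : R) :
    convolution w R (single w k r) (single w m s) = single w (k + m) (r * s) := by
  rw [convolution, lift_single]
  change r • shift w R k (single w m s) = _
  rw [shift, lift_single, smul_single]

theorem convolution_comm (x y : WeightedL1 w R) : convolution w R x y = convolution w R y x := by
  suffices h : convolution w R = (convolution w R).flip from congr($h x y)
  refine continuousLinearMap_ext fun k r => continuousLinearMap_ext fun m s => ?_
  rw [ContinuousLinearMap.flip_apply, convolution_single, convolution_single, add_comm, mul_comm]

theorem single_zero_one_convolution (x : WeightedL1 w R) :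
    convolution w R (single w 0 1) x = x := by
  suffices h : convolution w R (single w 0 1) = .id ℝ _ from congr($h x)
  refine continuousLinearMap_ext fun m s => ?_
  rw [convolution_single, zero_add, one_mul, ContinuousLinearMap.id_apply]

theorem convolution_assoc (x y z : WeightedL1 w R) :
    convolution w R (convolution w R x y) z = convolution w R x (convolution w R y z) := by
  let W := WeightedL1 w R
  let c := convolution w R
  suffices h : (compL ℝ W W (W →L[ℝ] W) c).comp c =
      ((compL ℝ W (W →L[ℝ] W) (W →L[ℝ] W)).flip c).comp ((compL ℝ W W W).comp c) from
    congr($h x y z)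
  refine continuousLinearMap_ext fun k r => continuousLinearMap_ext fun m s =>
    continuousLinearMap_ext fun n t => ?_
  change c (c (single w k r) (single w m s)) (single w n t) =
    c (single w k r) (c (single w m s) (single w n t))
  simp only [c, convolution_single, add_assoc, mul_assoc]

theorem norm_convolution_le (x y : WeightedL1 w R) : ‖convolution w R x y‖ ≤ ‖x‖ * ‖y‖ :=
  (((convolution w R x).le_of_opNorm_le (norm_lift_le _ x) y)).trans_eq (by rw [one_mul])

noncomputable instance : NormedCommRing (WeightedL1 w R) where
  __ := (inferInstance : NormedAddCommGroup (WeightedL1 w R))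
  mul x y := convolution w R x y
  one := single w 0 1
  mul_assoc := convolution_assoc
  mul_comm := convolution_comm
  one_mul := single_zero_one_convolution
  mul_one x := (convolution_comm x _).trans (single_zero_one_convolution x)
  zero_mul x := congr($(map_zero (convolution w R)) x)
  mul_zero x := map_zero (convolution w R x)
  left_distrib x := map_add (convolution w R x)
  right_distrib x y z := congr($(map_add (convolution w R) x y) z)
  norm_mul_le := norm_convolution_le

theorem one_def : (1 : WeightedL1 w R) = single w 0 1 := rfl

theorem single_mul_single (k m : G) (r s : R) :
    single w k r * single w m s = single w (k + m) (r * s) :=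
  convolution_single k m r s

instance [NormOneClass R] : NormOneClass (WeightedL1 w R) :=
  ⟨by rw [one_def, norm_single, w.map_zero, norm_one, one_mul]⟩

noncomputable instance : NormedAlgebra ℝ (WeightedL1 w R) where
  __ := Algebra.ofModule
    (fun c x y => congr($(map_smul (convolution w R) c x) y))
    (fun c x y => map_smul (convolution w R x) c y)
  norm_smul_le := norm_smul_le

variable [NormedRing A] [NormedAlgebra ℝ A] [CompleteSpace A] {C : ℝ}

/-- The algebra homomorphism sending `single w k r` to `f k r`. -/
noncomputable def liftAlgHom (f : G → R →L[ℝ] A) (hf : ∀ k, ‖f k‖ ≤ C * w k)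
    (map_one : f 0 1 = 1) (map_mul : ∀ k m r s, f (k + m) (r * s) = f k r * f m s) :
    WeightedL1 w R →A[ℝ] A where
  __ := AlgHom.ofLinearMap (lift f hf).toLinearMap
    ((lift_single hf 0 1).trans map_one) fun x y => by
      let W := WeightedL1 w R
      let L := lift f hf
      suffices h : (compL ℝ W W A L).comp (convolution w R) =
          ((compL ℝ W A A).flip L).comp ((ContinuousLinearMap.mul ℝ A).comp L) from
        congr($h x y)
      refine continuousLinearMap_ext fun k r => continuousLinearMap_ext fun m s => ?_
      change L (convolution w R (single w k r) (single w m s)) = L (single w k r) * L (single w m s)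
      simp only [L, convolution_single, lift_single, map_mul]
  cont := (lift f hf).continuous

variable (f : G → R →L[ℝ] A) (hf : ∀ k, ‖f k‖ ≤ C * w k) (map_one : f 0 1 = 1)
  (map_mul : ∀ k m r s, f (k + m) (r * s) = f k r * f m s)

theorem liftAlgHom_single (k : G) (r : R) :
    liftAlgHom f hf map_one map_mul (single w k r) = f k r :=
  lift_single hf k r

theorem norm_liftAlgHom_le (x : WeightedL1 w R) :
    ‖liftAlgHom f hf map_one map_mul x‖ ≤ C * ‖x‖ :=
  norm_lift_le hf x

theorem hasSum_liftAlgHom (x : WeightedL1 w R) :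
    HasSum (fun k => f k (coeff k x)) (liftAlgHom f hf map_one map_mul x) :=
  hasSum_lift hf x

end Algebra

section Conj

variable {G : Type*} [AddCommGroup G] {w : SubmultiplicativeWeight G}
variable {R : Type*} [NormedCommRing R] [NormedAlgebra ℝ R] [CompleteSpace R] [StarRing R]
  [NormedStarGroup R] [StarModule ℝ R]

/-- The involution `x ↦ (k ↦ star (x (-k)))` of the weighted group algebra. -/
noncomputable def conj (hw : ∀ k, w (-k) = w k) : WeightedL1 w R →A[ℝ] WeightedL1 w R :=
  liftAlgHom (fun k => (single w (-k)).comp (starL' ℝ : R ≃L[ℝ] R).toContinuousLinearMap) (C := 1)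
    (fun k => opNorm_le_bound _ (by simpa using (w.pos k).le) fun r => by
      change ‖single w (-k) (star r)‖ ≤ _
      rw [norm_single, norm_star, one_mul, hw])
    (by
      change single w (-0) (star 1) = 1
      rw [neg_zero, star_one, one_def])
    fun k m r s => by
      change single w (-(k + m)) (star (r * s)) = single w (-k) (star r) * single w (-m) (star s)
      rw [single_mul_single, neg_add, star_mul']

variable (hw : ∀ k, w (-k) = w k)

theorem conj_single (k : G) (r : R) : conj hw (single w k r) = single w (-k) (star r) :=
  liftAlgHom_single ..

theorem coeff_conj (x : WeightedL1 w R) (k : G) : coeff k (conj hw x) = star (coeff (-k) x) := by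
  let starCLM : R →L[ℝ] R := (starL' ℝ : R ≃L[ℝ] R).toContinuousLinearMap
  let conjCLM : WeightedL1 w R →L[ℝ] WeightedL1 w R := (conj hw).toContinuousLinearMap
  suffices h : (coeff k).comp conjCLM = starCLM.comp (coeff (-k)) from congr($h x)
  refine continuousLinearMap_ext fun m r => ?_
  change coeff k (conj hw (single w m r)) = star (coeff (-k) (single w m r))
  rw [conj_single]
  obtain rfl | hk := eq_or_ne k (-m)
  · rw [neg_neg, coeff_single_same, coeff_single_same]
  · rw [coeff_single_of_ne hk, coeff_single_of_ne (fun h => hk (by rw [← h, neg_neg])), star_zero]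

theorem conj_mapCoeff {f g : R →L[ℝ] R} (hfg : ∀ r, g (star r) = star (f r))
    (x : WeightedL1 w R) : conj hw (mapCoeff f x) = mapCoeff g (conj hw x) := by
  let conjCLM : WeightedL1 w R →L[ℝ] WeightedL1 w R := (conj hw).toContinuousLinearMap
  suffices h : conjCLM.comp (mapCoeff f) = (mapCoeff g).comp conjCLM from congr($h x)
  refine continuousLinearMap_ext fun k r => ?_
  change conj hw (mapCoeff f (single w k r)) = mapCoeff g (conj hw (single w k r))
  rw [mapCoeff_single, conj_single, conj_single, mapCoeff_single, hfg]

end Conj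

end WeightedL1

end Weighted

section Lattice

variable {η : ℝ}

theorem wnorm_eq_sum_of_support_subset {ℓ : ℕ →₀ ℤ} {S : Finset ℕ} (hS : ℓ.support ⊆ S) :
    wnorm η ℓ = ∑ i ∈ S, ((i : ℝ) + 1) ^ η * |(ℓ i : ℝ)| :=
  Finsupp.sum_of_support_subset ℓ hS (fun i n => ((i : ℝ) + 1) ^ η * |(n : ℝ)|) fun i _ => by simp

theorem edot_eq_sum_of_support_subset {ℓ : ℕ →₀ ℤ} {S : Finset ℕ} (hS : ℓ.support ⊆ S)
    (φ : ℕ → ℂ) : edot ℓ φ = ∑ i ∈ S, (ℓ i : ℂ) * φ i :=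
  Finsupp.sum_of_support_subset ℓ hS (fun i n => (n : ℂ) * φ i) fun i _ => by simp

theorem wnorm_nonneg (ℓ : ℕ →₀ ℤ) : 0 ≤ wnorm η ℓ :=
  Finset.sum_nonneg fun i _ => by positivity

theorem wnorm_zero : wnorm η 0 = 0 :=
  Finset.sum_empty

theorem wnorm_neg (ℓ : ℕ →₀ ℤ) : wnorm η (-ℓ) = wnorm η ℓ := by
  simp [wnorm]

theorem wnorm_add_le (k m : ℕ →₀ ℤ) : wnorm η (k + m) ≤ wnorm η k + wnorm η m := by
  rw [wnorm_eq_sum_of_support_subset Finsupp.support_add,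
    wnorm_eq_sum_of_support_subset (Finset.subset_union_left (s₂ := m.support)),
    wnorm_eq_sum_of_support_subset (Finset.subset_union_right (s₁ := k.support)),
    ← Finset.sum_add_distrib]
  refine Finset.sum_le_sum fun i _ => ?_
  rw [← mul_add, Finsupp.add_apply, Int.cast_add]
  gcongr
  exact abs_add_le _ _

theorem edot_zero (φ : ℕ → ℂ) : edot 0 φ = 0 :=
  Finset.sum_empty

theorem edot_neg (ℓ : ℕ →₀ ℤ) (φ : ℕ → ℂ) : edot (-ℓ) φ = -edot ℓ φ := by
  simp [edot]

theorem edot_add (k m : ℕ →₀ ℤ) (φ : ℕ → ℂ) : edot (k + m) φ = edot k φ + edot m φ := by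
  rw [edot_eq_sum_of_support_subset Finsupp.support_add,
    edot_eq_sum_of_support_subset (Finset.subset_union_left (s₂ := m.support)),
    edot_eq_sum_of_support_subset (Finset.subset_union_right (s₁ := k.support)),
    ← Finset.sum_add_distrib]
  simp only [Finsupp.add_apply, Int.cast_add, add_mul]

theorem edot_add_right (ℓ : ℕ →₀ ℤ) (φ ψ : ℕ → ℂ) :
    edot ℓ (fun i => φ i + ψ i) = edot ℓ φ + edot ℓ ψ := by
  simp only [edot, mul_add, Finset.sum_add_distrib]

theorem conj_edot (ℓ : ℕ →₀ ℤ) (φ : ℕ → ℂ) :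
    star (edot ℓ φ) = edot ℓ fun i => star (φ i) := by
  simp [edot]

theorem norm_edot_le (hη : 0 ≤ η) (ℓ : ℕ →₀ ℤ) {φ : ℕ → ℂ} {C : ℝ} (hφ : ∀ i, ‖φ i‖ ≤ C) :
    ‖edot ℓ φ‖ ≤ wnorm η ℓ * C := by
  rw [edot, wnorm, Finset.sum_mul]
  refine norm_sum_le_of_le _ fun i _ => ?_
  rw [norm_mul, Complex.norm_intCast]
  have h1 : 1 ≤ ((i : ℝ) + 1) ^ η := Real.one_le_rpow (by simp) hη
  exact mul_le_mul (le_mul_of_one_le_left (abs_nonneg _) h1) (hφ i) (norm_nonneg _)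
    (by positivity)

theorem abs_edot_im_le {s : ℝ} {φ : ℕ → ℂ} (hφ : φ ∈ Tinf η s) (ℓ : ℕ →₀ ℤ) :
    |(edot ℓ φ).im| ≤ s * wnorm η ℓ := by
  rw [edot, wnorm, Complex.im_sum, Finset.mul_sum]
  refine (Finset.abs_sum_le_sum_abs _ _).trans (Finset.sum_le_sum fun i _ => ?_)
  calc |((ℓ i : ℂ) * φ i).im| = |(ℓ i : ℝ)| * |(φ i).im| := by simp [abs_mul]
    _ ≤ |(ℓ i : ℝ)| * (s * ((i : ℝ) + 1) ^ η) := by gcongr; exact hφ i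
    _ = s * (((i : ℝ) + 1) ^ η * |(ℓ i : ℝ)|) := by ring

theorem norm_exp_I_mul_edot_le {s : ℝ} {φ : ℕ → ℂ} (hφ : φ ∈ Tinf η s) (ℓ : ℕ →₀ ℤ) :
    ‖Complex.exp (Complex.I * edot ℓ φ)‖ ≤ Real.exp (s * wnorm η ℓ) := by
  rw [Complex.norm_exp, Complex.I_mul_re]
  exact Real.exp_le_exp.2 ((neg_le_abs _).trans (abs_edot_im_le hφ ℓ))

theorem Tinf_mono {s t : ℝ} (hst : s ≤ t) : Tinf η s ⊆ Tinf η t := fun _ hφ i =>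
  (hφ i).trans (by gcongr)

theorem add_mem_Tinf (hη : 0 ≤ η) {s r : ℝ} {φ ψ : ℕ → ℂ} (hφ : φ ∈ Tinf η s)
    (hψ : ∀ i, ‖ψ i‖ ≤ r) : (fun i => φ i + ψ i) ∈ Tinf η (s + r) := fun i => by
  have h1 : 1 ≤ ((i : ℝ) + 1) ^ η := Real.one_le_rpow (by simp) hη
  have hr : 0 ≤ r := (norm_nonneg _).trans (hψ i)
  calc |(φ i + ψ i).im| ≤ |(φ i).im| + |(ψ i).im| := by rw [Complex.add_im]; exact abs_add_le _ _
    _ ≤ s * ((i : ℝ) + 1) ^ η + r * ((i : ℝ) + 1) ^ η := add_le_add (hφ i) <|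
      ((Complex.abs_im_le_norm _).trans (hψ i)).trans (le_mul_of_one_le_right hr h1)
    _ = (s + r) * ((i : ℝ) + 1) ^ η := by ring

end Lattice

section Torus

open scoped BoundedContinuousFunction ENNReal NNReal
open WeightedL1
open NormedSpace (exp)

variable {η : ℝ} {s t : ℝ≥0}

/-- The Banach algebra `ℓ^∞` of bounded complex sequences. -/
abbrev BoundedSeq : Type := ℕ →ᵇ ℂ

/-- The weight `e^{s|ℓ|_η}` on frequencies. -/
noncomputable def expWeight (η : ℝ) (s : ℝ≥0) : SubmultiplicativeWeight (ℕ →₀ ℤ) where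
  toFun ℓ := Real.exp (s * wnorm η ℓ)
  pos ℓ := Real.exp_pos _
  map_zero := by rw [wnorm_zero, mul_zero, Real.exp_zero]
  map_add_le k m := by
    rw [← Real.exp_add, ← mul_add]
    gcongr
    exact wnorm_add_le k m

theorem expWeight_apply (ℓ : ℕ →₀ ℤ) : expWeight η s ℓ = Real.exp (s * wnorm η ℓ) := rfl

theorem expWeight_neg (ℓ : ℕ →₀ ℤ) : expWeight η s (-ℓ) = expWeight η s ℓ := by
  rw [expWeight_apply, expWeight_apply, wnorm_neg]

/-- The space `H(T^∞_s, ℓ^∞)`. -/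
abbrev FourierSeries (η : ℝ) (s : ℝ≥0) : Type :=
  WeightedL1 (expWeight η s) BoundedSeq

namespace FourierSeries

/-- The Fourier coefficients, in the form consumed by `realize`. -/
noncomputable def coeffs (x : FourierSeries η s) (ℓ : ℕ →₀ ℤ) (i : ℕ) : ℂ :=
  coeff ℓ x i

theorem supNormCoef_coeffs (x : FourierSeries η s) :
    supNormCoef η s x.coeffs = ENNReal.ofReal ‖x‖ := by
  rw [← (hasSum_norm x).tsum_eq, ENNReal.ofReal_tsum_of_nonneg
    (fun ℓ => mul_nonneg ((expWeight η s).pos ℓ).le (norm_nonneg _)) (hasSum_norm x).summable]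
  refine tsum_congr fun ℓ => ?_
  rw [ENNReal.ofReal_mul ((expWeight η s).pos ℓ).le, ofReal_norm,
    BoundedContinuousFunction.enorm_eq_iSup_enorm]
  rfl

theorem exists_coeffs_eq {a : (ℕ →₀ ℤ) → ℕ → ℂ} (ha : supNormCoef η s a ≠ ⊤) :
    ∃ x : FourierSeries η s, x.coeffs = a := by
  have hterm (ℓ : ℕ →₀ ℤ) : (⨆ i, (‖a ℓ i‖₊ : ℝ≥0∞)) ≠ ⊤ := fun h =>
    ENNReal.ne_top_of_tsum_ne_top ha ℓ <| by
      rw [h, ENNReal.mul_top (ENNReal.ofReal_pos.2 (Real.exp_pos _)).ne']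
  have hbound (ℓ : ℕ →₀ ℤ) (i : ℕ) : ‖a ℓ i‖ ≤ (⨆ i, (‖a ℓ i‖₊ : ℝ≥0∞)).toReal := by
    simpa using ENNReal.toReal_mono (hterm ℓ) (le_iSup (fun i => (‖a ℓ i‖₊ : ℝ≥0∞)) i)
  let c (ℓ : ℕ →₀ ℤ) : BoundedSeq :=
    BoundedContinuousFunction.ofNormedAddCommGroupDiscrete (a ℓ) _ (hbound ℓ)
  have hsum : Summable fun ℓ => expWeight η s ℓ * ‖c ℓ‖ := by
    refine (ENNReal.summable_toReal ha).congr fun ℓ => ?_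
    rw [ENNReal.toReal_mul, ENNReal.toReal_ofReal (Real.exp_nonneg _), ← toReal_enorm,
      BoundedContinuousFunction.enorm_eq_iSup_enorm]
    rfl
  obtain ⟨x, hx⟩ := exists_coeff_eq hsum
  exact ⟨x, funext₂ fun ℓ i => congr($(hx ℓ) i)⟩

theorem realOnReal_coeffs_iff {x : FourierSeries η s} :
    RealOnReal x.coeffs ↔ conj expWeight_neg x = x := by
  refine ⟨fun h => ext_coeff fun ℓ => ?_, fun h ℓ i => ?_⟩
  · ext i
    simpa [coeff_conj, coeffs] using h (-ℓ) i
  · conv_rhs => rw [← h]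
    simp [coeffs, coeff_conj]

/-- Multiplication by the character `e^{iℓ·θ}`. -/
noncomputable def character (θ : ℕ → ℂ) (ℓ : ℕ →₀ ℤ) : BoundedSeq →L[ℝ] BoundedSeq :=
  (Complex.exp (Complex.I * edot ℓ θ) • ContinuousLinearMap.id ℂ BoundedSeq).restrictScalars ℝ

theorem character_apply (θ : ℕ → ℂ) (ℓ : ℕ →₀ ℤ) (v : BoundedSeq) :
    character θ ℓ v = Complex.exp (Complex.I * edot ℓ θ) • v :=
  rfl

variable {θ : ℕ → ℂ} (hθ : θ ∈ Tinf η s)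

include hθ in
theorem norm_character_le (ℓ : ℕ →₀ ℤ) : ‖character θ ℓ‖ ≤ 1 * expWeight η s ℓ :=
  ContinuousLinearMap.opNorm_le_bound _ (by simpa using ((expWeight η s).pos ℓ).le) fun v => by
    rw [character_apply, norm_smul, one_mul]
    gcongr
    exact norm_exp_I_mul_edot_le hθ ℓ

/-- Evaluation of a series at a point of `T^∞_s`. -/
noncomputable def eval : FourierSeries η s →A[ℝ] BoundedSeq :=
  liftAlgHom (character θ) (norm_character_le hθ) (by simp [character_apply, edot_zero])
    fun k m u v => by
      simp only [character_apply, edot_add, mul_add, Complex.exp_add, mul_smul_mul_comm]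

theorem eval_single (ℓ : ℕ →₀ ℤ) (v : BoundedSeq) :
    eval hθ (single _ ℓ v) = Complex.exp (Complex.I * edot ℓ θ) • v :=
  liftAlgHom_single ..

theorem norm_eval_le (x : FourierSeries η s) : ‖eval hθ x‖ ≤ ‖x‖ :=
  (norm_liftAlgHom_le ..).trans_eq (one_mul _)

theorem eval_apply (x : FourierSeries η s) (i : ℕ) : eval hθ x i = realize x.coeffs θ i := by
  have h : HasSum (fun ℓ => character θ ℓ (coeff ℓ x)) (eval hθ x) := hasSum_liftAlgHom ..
  refine (h.mapL (BoundedContinuousFunction.evalCLM ℂ i)).tsum_eq.symm.trans ?_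
  exact tsum_congr fun ℓ => mul_comm _ _

theorem eval_mapCoeff (f : BoundedSeq →L[ℂ] BoundedSeq) (x : FourierSeries η s) :
    eval hθ (mapCoeff (f.restrictScalars ℝ) x) = f (eval hθ x) := by
  suffices h : (eval hθ).toContinuousLinearMap.comp (mapCoeff (f.restrictScalars ℝ)) =
      (f.restrictScalars ℝ).comp (eval hθ).toContinuousLinearMap from congr($h x)
  refine continuousLinearMap_ext fun ℓ v => ?_
  change eval hθ (mapCoeff (f.restrictScalars ℝ) (single _ ℓ v)) = f (eval hθ (single _ ℓ v))
  rw [mapCoeff_single, eval_single, eval_single, map_smul]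
  rfl

/-- The `ℓ^∞`-constant `iℓ·v`, as a function of `v`. -/
noncomputable def edotCLM (ℓ : ℕ →₀ ℤ) : BoundedSeq →L[ℂ] BoundedSeq :=
  (algebraMapCLM ℂ BoundedSeq).comp
    (∑ i ∈ ℓ.support, (Complex.I * ℓ i) • BoundedContinuousFunction.evalCLM ℂ i)

theorem edotCLM_apply (ℓ : ℕ →₀ ℤ) (v : BoundedSeq) :
    edotCLM ℓ v = algebraMap ℂ BoundedSeq (Complex.I * edot ℓ v) := by
  refine congrArg (algebraMap ℂ BoundedSeq) ?_
  simp [edot, Finset.mul_sum, mul_assoc]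

theorem edotCLM_neg_star (ℓ : ℕ →₀ ℤ) (v : BoundedSeq) :
    edotCLM (-ℓ) (star v) = star (edotCLM ℓ v) := by
  have h : Complex.I * edot (-ℓ) ⇑(star v) = star (Complex.I * edot ℓ v) := by
    rw [edot_neg, star_mul', conj_edot, Complex.star_def, Complex.conj_I, mul_neg, neg_mul]
    rfl
  rw [edotCLM_apply, edotCLM_apply, h, algebraMap_star_comm]

theorem norm_edotCLM_le (hη : 0 ≤ η) (ℓ : ℕ →₀ ℤ) : ‖edotCLM ℓ‖ ≤ wnorm η ℓ :=
  ContinuousLinearMap.opNorm_le_bound _ (wnorm_nonneg ℓ) fun v => by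
    rw [edotCLM_apply, norm_algebraMap', norm_mul, Complex.norm_I, one_mul]
    exact norm_edot_le hη ℓ v.norm_coe_le_norm

/-- The series of `φ ↦ iℓ·β(φ)`, repeated in every component. -/
noncomputable def phase (ℓ : ℕ →₀ ℤ) : FourierSeries η s →L[ℝ] FourierSeries η s :=
  mapCoeff ((edotCLM ℓ).restrictScalars ℝ)

theorem norm_phase_le (hη : 0 ≤ η) (ℓ : ℕ →₀ ℤ) (b : FourierSeries η s) :
    ‖phase ℓ b‖ ≤ wnorm η ℓ * ‖b‖ :=
  (norm_mapCoeff_le _ b).trans <| by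
    gcongr
    exact (ContinuousLinearMap.norm_restrictScalars _).trans_le (norm_edotCLM_le hη ℓ)

theorem conj_phase (ℓ : ℕ →₀ ℤ) (b : FourierSeries η s) :
    conj expWeight_neg (phase ℓ b) = phase (-ℓ) (conj expWeight_neg b) :=
  conj_mapCoeff _ (edotCLM_neg_star ℓ) b

theorem eval_phase (ℓ : ℕ →₀ ℤ) (b : FourierSeries η s) :
    eval hθ (phase ℓ b) = algebraMap ℂ BoundedSeq (Complex.I * edot ℓ (eval hθ b)) :=
  (eval_mapCoeff hθ _ b).trans (edotCLM_apply ℓ _)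

/-- The `ℓ`-th summand `a(ℓ) e^{iℓ·φ} e^{iℓ·β(φ)}` of the composition `α(φ + β(φ))`. -/
noncomputable def compTerm (a : FourierSeries η t) (b : FourierSeries η s) (ℓ : ℕ →₀ ℤ) :
    FourierSeries η s :=
  single _ ℓ (coeff ℓ a) * exp (phase ℓ b)

/-- The series of `φ ↦ α(φ + β(φ))`; the sum converges when `s + ‖β‖ ≤ t`. -/
noncomputable def compIdAdd (a : FourierSeries η t) (b : FourierSeries η s) : FourierSeries η s :=
  ∑' ℓ, compTerm a b ℓ

section Estimates

variable {a : FourierSeries η t} {b b' : FourierSeries η s} {r τ : ℝ}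

theorem norm_compTerm_le (hη : 0 ≤ η) (hb : ‖b‖ ≤ r) (hst : s + r ≤ t) (ℓ : ℕ →₀ ℤ) :
    ‖compTerm a b ℓ‖ ≤ expWeight η t ℓ * ‖coeff ℓ a‖ := by
  have hw := wnorm_nonneg (η := η) ℓ
  have hexp : ‖exp (phase ℓ b)‖ ≤ Real.exp (wnorm η ℓ * r) := by
    refine (norm_exp_le_exp_norm _).trans (Real.exp_le_exp.2 ((norm_phase_le hη ℓ b).trans ?_))
    gcongr
  calc ‖compTerm a b ℓ‖ ≤ ‖single (expWeight η s) ℓ (coeff ℓ a)‖ * ‖exp (phase ℓ b)‖ :=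
        norm_mul_le _ _
    _ ≤ Real.exp (s * wnorm η ℓ) * ‖coeff ℓ a‖ * Real.exp (wnorm η ℓ * r) := by
        rw [norm_single, expWeight_apply]
        gcongr
    _ = Real.exp ((s + r) * wnorm η ℓ) * ‖coeff ℓ a‖ := by
        rw [add_mul, Real.exp_add, mul_comm r]
        ring
    _ ≤ expWeight η t ℓ * ‖coeff ℓ a‖ := by
        rw [expWeight_apply]
        gcongr

theorem hasSum_compTerm (hη : 0 ≤ η) (hb : ‖b‖ ≤ r) (hst : s + r ≤ t) :
    HasSum (compTerm a b) (compIdAdd a b) :=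
  (Summable.of_norm_bounded (hasSum_norm a).summable (norm_compTerm_le hη hb hst)).hasSum

theorem norm_compIdAdd_le (hη : 0 ≤ η) (hb : ‖b‖ ≤ r) (hst : s + r ≤ t) :
    ‖compIdAdd a b‖ ≤ ‖a‖ :=
  tsum_of_norm_bounded (hasSum_norm a) (norm_compTerm_le hη hb hst)

theorem norm_compTerm_sub_le (hη : 0 ≤ η) (hb : ‖b‖ ≤ r) (hb' : ‖b'‖ ≤ r) (hτ : 0 < τ)
    (hst : s + r + τ ≤ t) (ℓ : ℕ →₀ ℤ) :
    ‖compTerm a b ℓ - compTerm a b' ℓ‖ ≤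
      τ⁻¹ * ‖b - b'‖ * (expWeight η t ℓ * ‖coeff ℓ a‖) := by
  have hw := wnorm_nonneg (η := η) ℓ
  have hphase {c : FourierSeries η s} (hc : ‖c‖ ≤ r) : ‖phase ℓ c‖ ≤ wnorm η ℓ * r :=
    (norm_phase_le hη ℓ c).trans (by gcongr)
  have hexp : ‖exp (phase ℓ b) - exp (phase ℓ b')‖ ≤
      Real.exp (wnorm η ℓ * r) * (wnorm η ℓ * ‖b - b'‖) := by
    refine (norm_exp_sub_exp_le (hphase hb) (hphase hb')).trans ?_
    rw [← map_sub]
    gcongr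
    exact norm_phase_le hη ℓ _
  -- the Cauchy estimate: a factor `wnorm η ℓ` costs a strip of width `τ`
  have hcauchy : wnorm η ℓ ≤ τ⁻¹ * Real.exp (τ * wnorm η ℓ) := by
    rw [le_inv_mul_iff₀ hτ]
    linarith [Real.add_one_le_exp (τ * wnorm η ℓ)]
  calc ‖compTerm a b ℓ - compTerm a b' ℓ‖
      ≤ ‖single (expWeight η s) ℓ (coeff ℓ a)‖ * ‖exp (phase ℓ b) - exp (phase ℓ b')‖ := by
        rw [compTerm, compTerm, ← mul_sub]
        exact norm_mul_le _ _
    _ ≤ Real.exp (s * wnorm η ℓ) * ‖coeff ℓ a‖ *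
          (Real.exp (wnorm η ℓ * r) * (τ⁻¹ * Real.exp (τ * wnorm η ℓ) * ‖b - b'‖)) := by
        rw [norm_single, expWeight_apply]
        gcongr
        exact hexp.trans (by gcongr)
    _ = τ⁻¹ * ‖b - b'‖ * (Real.exp ((s + r + τ) * wnorm η ℓ) * ‖coeff ℓ a‖) := by
        rw [add_mul, add_mul, Real.exp_add, Real.exp_add, mul_comm r]
        ring
    _ ≤ τ⁻¹ * ‖b - b'‖ * (expWeight η t ℓ * ‖coeff ℓ a‖) := by
        rw [expWeight_apply]
        gcongr

theorem norm_compIdAdd_sub_le (hη : 0 ≤ η) (hb : ‖b‖ ≤ r) (hb' : ‖b'‖ ≤ r) (hτ : 0 < τ)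
    (hst : s + r + τ ≤ t) :
    ‖compIdAdd a b - compIdAdd a b'‖ ≤ τ⁻¹ * ‖b - b'‖ * ‖a‖ := by
  have hst' : s + r ≤ t := by linarith
  rw [← ((hasSum_compTerm hη hb hst').sub (hasSum_compTerm hη hb' hst')).tsum_eq]
  exact tsum_of_norm_bounded ((hasSum_norm a).mul_left _)
    (norm_compTerm_sub_le hη hb hb' hτ hst)

end Estimates

theorem conj_compTerm (a : FourierSeries η t) (b : FourierSeries η s) (ℓ : ℕ →₀ ℤ) :
    conj expWeight_neg (compTerm a b ℓ) =
      compTerm (conj expWeight_neg a) (conj expWeight_neg b) (-ℓ) := by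
  rw [compTerm, compTerm, map_mul, conj_single, map_exp_of_continuousAlgHom, conj_phase, coeff_conj,
    neg_neg]

section Composition

variable {a : FourierSeries η t} {b : FourierSeries η s} {r : ℝ}

theorem conj_compIdAdd (hη : 0 ≤ η) (hb : ‖b‖ ≤ r) (hst : s + r ≤ t) :
    conj expWeight_neg (compIdAdd a b) =
      compIdAdd (conj expWeight_neg a) (conj expWeight_neg b) := by
  have h := (hasSum_compTerm (a := a) hη hb hst).map (conj expWeight_neg) (conj _).continuous
  have h' : conj expWeight_neg ∘ compTerm a b =
      compTerm (conj expWeight_neg a) (conj expWeight_neg b) ∘ Equiv.neg _ :=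
    funext (conj_compTerm a b)
  rw [h', (Equiv.neg _).hasSum_iff] at h
  exact h.tsum_eq.symm

theorem eval_compTerm (a : FourierSeries η t) (b : FourierSeries η s) (ℓ : ℕ →₀ ℤ) (i : ℕ) :
    eval hθ (compTerm a b ℓ) i =
      a.coeffs ℓ i * Complex.exp (Complex.I * edot ℓ fun j => θ j + eval hθ b j) := by
  have h : eval hθ (compTerm a b ℓ) = Complex.exp (Complex.I * edot ℓ θ) • coeff ℓ a *
      algebraMap ℂ BoundedSeq (Complex.exp (Complex.I * edot ℓ (eval hθ b))) := by
    rw [compTerm, map_mul, eval_single, map_exp_of_continuousAlgHom, eval_phase,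
      ← NormedSpace.algebraMap_exp_comm, Complex.exp_eq_exp_ℂ]
  calc eval hθ (compTerm a b ℓ) i
      = Complex.exp (Complex.I * edot ℓ θ) * a.coeffs ℓ i *
          Complex.exp (Complex.I * edot ℓ (eval hθ b)) := by
        rw [h, ← Algebra.commutes, ← Algebra.smul_def]
        exact mul_comm _ _
    _ = a.coeffs ℓ i * Complex.exp (Complex.I * edot ℓ fun j => θ j + eval hθ b j) := by
        rw [edot_add_right, mul_add, Complex.exp_add]
        ring

theorem eval_compIdAdd (hη : 0 ≤ η) (hb : ‖b‖ ≤ r) (hst : s + r ≤ t) (i : ℕ) :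
    eval hθ (compIdAdd a b) i = realize a.coeffs (fun j => θ j + eval hθ b j) i := by
  have h := ((hasSum_compTerm (a := a) hη hb hst).mapL (eval hθ).toContinuousLinearMap).mapL
    (BoundedContinuousFunction.evalCLM ℂ i)
  exact h.tsum_eq.symm.trans (tsum_congr fun ℓ => eval_compTerm hθ a b ℓ i)

end Composition

/-- The map `φ ↦ φ + α(φ)`. -/
noncomputable def idAdd (x : FourierSeries η s) (φ : ℕ → ℂ) : ℕ → ℂ :=
  fun i => φ i + realize x.coeffs φ i

theorem idAdd_apply (x : FourierSeries η s) (φ : ℕ → ℂ) (i : ℕ) :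
    idAdd x φ i = φ i + realize x.coeffs φ i :=
  rfl

section Inverse

variable {a : FourierSeries η t} {b : FourierSeries η s} {r τ : ℝ} {θ : ℕ → ℂ}

theorem exists_compIdAdd_eq_neg (hη : 0 ≤ η) (hr : 0 < r) (hst : s + r + r ≤ t)
    (hconj : conj expWeight_neg a = a) (ha : ‖a‖ ≤ r / 2) :
    ∃ b : FourierSeries η s, conj expWeight_neg b = b ∧ ‖b‖ ≤ ‖a‖ ∧ compIdAdd a b = -b := by
  have hst' : s + r ≤ t := by linarith
  let K : Set (FourierSeries η s) := {b | ‖b‖ ≤ r ∧ conj expWeight_neg b = b}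
  have hK : IsClosed K := (isClosed_le continuous_norm continuous_const).inter
    (isClosed_eq (conj expWeight_neg).continuous continuous_id)
  have hmaps : Set.MapsTo (fun b => -compIdAdd a b) K K := fun b hb => by
    refine ⟨?_, ?_⟩
    · rw [norm_neg]
      linarith [norm_compIdAdd_le (a := a) hη hb.1 hst']
    · rw [map_neg, conj_compIdAdd hη hb.1 hst', hconj, hb.2]
  have hcontracting : ContractingWith (1 / 2) (hmaps.restrict _ K K) := by
    refine ⟨by norm_num, LipschitzWith.of_dist_le_mul fun b b' => ?_⟩
    change dist (-compIdAdd a (b : FourierSeries η s)) (-compIdAdd a b') ≤ _ * dist b.1 b'.1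
    rw [dist_neg_neg, dist_eq_norm, dist_eq_norm]
    calc ‖compIdAdd a b.1 - compIdAdd a b'.1‖ ≤ r⁻¹ * ‖b.1 - b'.1‖ * ‖a‖ :=
          norm_compIdAdd_sub_le hη b.2.1 b'.2.1 hr hst
      _ ≤ r⁻¹ * ‖b.1 - b'.1‖ * (r / 2) := by gcongr
      _ = ((1 / 2 : ℝ≥0) : ℝ) * ‖b.1 - b'.1‖ := by
          push_cast
          field_simp
  have hzero : (0 : FourierSeries η s) ∈ K := ⟨by simpa using hr.le, map_zero _⟩
  obtain ⟨b, hb, hfix, -⟩ := hcontracting.exists_fixedPoint' hK.isComplete hmaps hzero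
    (edist_ne_top _ _)
  have hneg : compIdAdd a b = -b := neg_eq_iff_eq_neg.1 hfix
  refine ⟨b, hb.2, ?_, hneg⟩
  rw [← norm_neg, ← hneg]
  exact norm_compIdAdd_le hη hb.1 hst'

theorem rightInvOn_idAdd (hη : 0 ≤ η) (hb : ‖b‖ ≤ r) (hst : s + r ≤ t)
    (hab : compIdAdd a b = -b) : Set.RightInvOn (idAdd b) (idAdd a) (Tinf η s) := fun θ hθ => by
  ext i
  have h : -realize b.coeffs θ i = realize a.coeffs (fun j => θ j + realize b.coeffs θ j) i := by
    simpa only [hab, map_neg, BoundedContinuousFunction.neg_apply, eval_apply] using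
      eval_compIdAdd (a := a) hθ hη hb hst i
  calc idAdd a (idAdd b θ) i = θ i + realize b.coeffs θ i + -realize b.coeffs θ i :=
        congrArg _ h.symm
    _ = θ i := add_neg_cancel_right _ _

theorem norm_realize_add_sub_realize_le (hη : 0 ≤ η) (hτ : 0 < τ) (hst : s + r + τ ≤ t)
    (hθ : θ ∈ Tinf η s) {v : BoundedSeq} (hv : ‖v‖ ≤ r) (i : ℕ) :
    ‖realize a.coeffs (fun j => θ j + v j) i - realize a.coeffs θ i‖ ≤ τ⁻¹ * ‖v‖ * ‖a‖ := by
  have hst' : s + r ≤ t := by linarith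
  -- the translation by `v` is the composition with `id + β` for the constant series `β = v`
  let b : FourierSeries η s := single _ 0 v
  have hb : ‖b‖ = ‖v‖ := by rw [norm_single, (expWeight η s).map_zero, one_mul]
  have hbr : ‖b‖ ≤ r := hb.trans_le hv
  have h0 : ‖(0 : FourierSeries η s)‖ ≤ r := norm_zero.trans_le ((norm_nonneg v).trans hv)
  have hevalb : eval hθ b = v := by
    rw [eval_single, edot_zero, mul_zero, Complex.exp_zero, one_smul]
  have h := (norm_eval_le hθ _).trans (norm_compIdAdd_sub_le (a := a) hη hbr h0 hτ hst)
  rw [sub_zero, hb] at h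
  refine le_trans ?_ (((eval hθ _).norm_coe_le_norm i).trans h)
  simp [eval_compIdAdd hθ hη hbr hst', eval_compIdAdd hθ hη h0 hst', hevalb]

theorem eq_zero_of_idAdd_add_eq (hη : 0 ≤ η) (hτ : ‖a‖ < τ) (hst : s + r + τ ≤ t)
    (hθ : θ ∈ Tinf η s) {v : BoundedSeq} (hv : ‖v‖ ≤ r)
    (h : idAdd a (fun j => θ j + v j) = idAdd a θ) : v = 0 := by
  have hτ₀ : 0 < τ := (norm_nonneg a).trans_lt hτ
  have hv_apply (i : ℕ) :
      v i = realize a.coeffs θ i - realize a.coeffs (fun j => θ j + v j) i := by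
    have hi := congrFun h i
    simp only [idAdd_apply] at hi
    linear_combination hi
  have hle : ‖v‖ ≤ τ⁻¹ * ‖v‖ * ‖a‖ := by
    refine (BoundedContinuousFunction.norm_le (by positivity)).2 fun i => ?_
    rw [hv_apply, norm_sub_rev]
    exact norm_realize_add_sub_realize_le hη hτ₀ hst hθ hv i
  by_contra hv₀
  refine hle.not_gt ?_
  rw [mul_right_comm]
  exact mul_lt_of_lt_one_left (norm_pos_iff.2 hv₀) ((inv_mul_lt_one₀ hτ₀).2 hτ)

theorem idAdd_mem_Tinf (hη : 0 ≤ η) (hθ : θ ∈ Tinf η s) (hst : s ≤ t) :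
    idAdd a θ ∈ Tinf η (s + ‖a‖) :=
  have hθt : θ ∈ Tinf η t := Tinf_mono (NNReal.coe_le_coe.2 hst) hθ
  add_mem_Tinf hη hθ fun j => by
    rw [← eval_apply hθt]
    exact ((eval hθt a).norm_coe_le_norm j).trans (norm_eval_le hθt a)

theorem leftInvOn_idAdd (hη : 0 ≤ η) {σ : ℝ≥0} (hb : ‖b‖ ≤ ‖a‖)
    (hab : compIdAdd a b = -b) (hσs : σ + ‖a‖ ≤ s) (hτ : ‖a‖ < τ) (hst : s + 2 * ‖a‖ + τ ≤ t) :
    Set.LeftInvOn (idAdd b) (idAdd a) (Tinf η σ) := fun φ hφ => by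
  have ha := norm_nonneg a
  have hσt : (σ : ℝ) ≤ t := by linarith
  have hφs : φ ∈ Tinf η s := Tinf_mono (by linarith) hφ
  have hφt : φ ∈ Tinf η t := Tinf_mono hσt hφ
  have hθ : idAdd a φ ∈ Tinf η s := Tinf_mono hσs (idAdd_mem_Tinf hη hφ hσt)
  let v : BoundedSeq := eval hφt a + eval hθ b
  have hv : (fun j => φ j + v j) = idAdd b (idAdd a φ) := by
    ext j
    simp only [v, BoundedContinuousFunction.add_apply, eval_apply, idAdd_apply, add_assoc]
  have hvnorm : ‖v‖ ≤ 2 * ‖a‖ := by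
    refine (norm_add_le _ _).trans ?_
    linarith [norm_eval_le hφt a, norm_eval_le hθ b]
  have hv₀ : v = 0 := eq_zero_of_idAdd_add_eq hη hτ hst hφs hvnorm <| by
    rw [hv, rightInvOn_idAdd hη hb (by linarith) hab hθ]
  rw [← hv, hv₀]
  exact funext fun j => add_zero (φ j)

end Inverse

end FourierSeries

end Torus

/-- Torus diffeomorphism: there is δ ∈ (0,1) such that if
α ∈ H(T^∞_{σ+ρ}, ℓ^∞) is real on real and `ρ⁻¹|α|_{σ+ρ} ≤ δ`, then
`φ ↦ φ + α(φ)` is invertible on `T^∞_σ`, with inverse `θ ↦ θ + α̃(θ)` where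
α̃ ∈ H(T^∞_{σ+ρ/2}, ℓ^∞) is real on real and `|α̃|_{σ+ρ/2} ≤ C|α|_{σ+ρ}`. -/
theorem torus_diffeomorphism (η : ℝ) (hη : 0 < η) :
    ∃ δ : ℝ, 0 < δ ∧ δ < 1 ∧ ∃ C > (0 : ℝ),
      ∀ (σ ρ : ℝ), 0 < σ → 0 < ρ →
      ∀ a : (ℕ →₀ ℤ) → ℕ → ℂ, RealOnReal a →
        supNormCoef η (σ + ρ) a ≤ ENNReal.ofReal (δ * ρ) →
        ∃ b : (ℕ →₀ ℤ) → ℕ → ℂ, RealOnReal b ∧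
          supNormCoef η (σ + ρ / 2) b ≤
            ENNReal.ofReal C * supNormCoef η (σ + ρ) a ∧
          (∀ φ ∈ Tinf η σ,
            (fun i => (φ i + realize a φ i) +
                realize b (fun k => φ k + realize a φ k) i) = φ) ∧
          (∀ θ ∈ Tinf η σ,
            (fun i => (θ i + realize b θ i) +
                realize a (fun k => θ k + realize b θ k) i) = θ) := by
  refine ⟨1 / 8, by norm_num, by norm_num, 1, one_pos, fun σ ρ hσ hρ a ha hnorm => ?_⟩
  lift σ to NNReal using hσ.le
  lift ρ to NNReal using hρ.le
  obtain ⟨a, rfl⟩ :=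
    FourierSeries.exists_coeffs_eq (s := σ + ρ) (hnorm.trans_lt ENNReal.ofReal_lt_top).ne
  have ha_norm : ‖a‖ ≤ 1 / 8 * ρ := (ENNReal.ofReal_le_ofReal_iff (by positivity)).1 <|
    a.supNormCoef_coeffs.symm.trans_le hnorm
  obtain ⟨b, hb, hba, hab⟩ := FourierSeries.exists_compIdAdd_eq_neg (s := σ + ρ / 2) (r := ρ / 4)
    hη.le (by positivity) (by push_cast; linarith) (FourierSeries.realOnReal_coeffs_iff.1 ha)
    (by linarith)
  refine ⟨b.coeffs, FourierSeries.realOnReal_coeffs_iff.2 hb, ?_, fun φ hφ => ?_, fun θ hθ => ?_⟩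
  · rw [ENNReal.ofReal_one, one_mul]
    exact b.supNormCoef_coeffs.trans_le <|
      (ENNReal.ofReal_le_ofReal hba).trans_eq a.supNormCoef_coeffs.symm
  · exact FourierSeries.leftInvOn_idAdd (τ := ρ / 4) hη.le hba hab
      (by push_cast; linarith) (by linarith) (by push_cast; linarith) hφ
  · exact FourierSeries.rightInvOn_idAdd hη.le hba (by push_cast; linarith) hab
      (Tinf_mono (by push_cast; linarith) hθ)
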